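/- There is a constant K > 0 such that for all sufficiently large n, ζ(3) − b_n/a_n ≤ K/a_n²; in fact any constant K greater than 6·ζ(3) works. -/

import Mathlib

/-- ζ(3), the sum of the series ∑_{m=1}^∞ 1/m³. -/
noncomputable def zeta3 : ℝ := ∑' m : ℕ, 1 / ((m : ℝ) + 1) ^ 3

/-- `z n = ∑_{m=1}^n 1/m³`. -/
noncomputable def zseq (n : ℕ) : ℝ := ∑ m ∈ Finset.Icc 1 n, 1 / (m : ℝ) ^ 3

/-- `a n = ∑_{k=0}^n C(n,k)² C(n+k,k)²`. -/
noncomputable def aseq (n : ℕ) : ℝ :=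
  ∑ k ∈ Finset.range (n + 1), (n.choose k : ℝ) ^ 2 * ((n + k).choose k : ℝ) ^ 2

/-- `b n = a n * z n + ∑_{k=1}^n ∑_{m=1}^k (-1)^{m+1} C(n,k)² C(n+k,k)²
      / (2 m³ C(n,m) C(n+m,m))`. -/
noncomputable def bseq (n : ℕ) : ℝ :=
  aseq n * zseq n +
    ∑ k ∈ Finset.Icc 1 n, ∑ m ∈ Finset.Icc 1 k,
      (-1 : ℝ) ^ (m + 1) * (n.choose k : ℝ) ^ 2 * ((n + k).choose k : ℝ) ^ 2 /
        (2 * (m : ℝ) ^ 3 * (n.choose m : ℝ) * ((n + m).choose m : ℝ))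

/-!
Apéry's numbers `a n` and `b n` both solve a recurrence
`(n+2)³ u (n+2) - q n * u (n+1) + (n+1)³ u n = 0`, by creative telescoping of their summands
`β n k ^ 2` and `β n k ^ 2 * c n k`, where `β n k = C(n,k) C(n+k,k)` and
`c n k = z n + ∑_{m=1}^k (-1)^{m+1} / (2 m³ β n m)`. Since the recurrence is symmetric, the
Casoratian of `a` and `b` times `(n+1)³` is constant, equal to `6`, hence
`b (n+1) / a (n+1) - b n / a n = 6 / ((n+1)³ a n a (n+1))`.

The quotient `b n / a n` is the mean of `c n 0, …, c n n` with weights `β n k ^ 2`, and these lie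
within `ζ(3) / (n+1)` of `z n`, so it tends to `ζ(3)`. As `a` is increasing, from the index `n` on
each increment of `b / a` is at most `6 / (a n)²` times the corresponding increment of `z`; summing
to infinity, `ζ(3) - b n / a n ≤ 6 (ζ(3) - z n) / (a n)²`.
-/

open Filter Finset
open scoped Topology

lemma sum_range_succ_eq_of_telescoping {M : Type*} [AddCommGroup M] {f g : ℕ → M}
    (h_zero : f 0 = g 0) (h_succ : ∀ k, f (k + 1) = g (k + 1) - g k) (n : ℕ) :
    ∑ k ∈ range (n + 1), f k = g n := by
  simp only [sum_range_succ', h_succ, h_zero, sum_range_sub, sub_add_cancel]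

lemma sub_le_mul_sub_of_tendsto {f g : ℕ → ℝ} {C x y : ℝ} {n : ℕ} (hf : Tendsto f atTop (𝓝 x))
    (hg : Tendsto g atTop (𝓝 y)) (h : ∀ k, n ≤ k → g (k + 1) - g k ≤ C * (f (k + 1) - f k)) :
    y - g n ≤ C * (x - f n) := by
  have gap_monotone : Monotone fun d ↦ C * f (d + n) - g (d + n) :=
    monotone_nat_of_le_succ fun d ↦ by
      rw [Nat.add_right_comm d 1 n]
      linarith [h (d + n) (Nat.le_add_left n d)]
  have gap_tendsto : Tendsto (fun k ↦ C * f k - g k) atTop (𝓝 (C * x - y)) :=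
    (hf.const_mul C).sub hg
  have gap_le := gap_monotone.ge_of_tendsto ((tendsto_add_atTop_iff_nat n).mpr gap_tendsto) 0
  rw [zero_add] at gap_le
  linarith

section JacobiOperator

variable {R : Type*} [CommRing R]

/-- The Jacobi (symmetric second-order difference) operator with off-diagonal coefficients `p` and
diagonal coefficients `-q`. Rows are numbered by their lowest index, to avoid subtraction in `ℕ`. -/
def jacobiOp (p q u : ℕ → R) (n : ℕ) : R :=
  p (n + 1) * u (n + 2) - q n * u (n + 1) + p n * u n

/-- The Casoratian (discrete Wronskian) of two sequences; over a field, it is the numerator of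
`v (n + 1) / u (n + 1) - v n / u n`. -/
def casoratian (u v : ℕ → R) (n : ℕ) : R :=
  u n * v (n + 1) - u (n + 1) * v n

lemma mul_casoratian_eq_of_jacobiOp_eq_zero {p q u v : ℕ → R} (hu : ∀ n, jacobiOp p q u n = 0)
    (hv : ∀ n, jacobiOp p q v n = 0) (n : ℕ) :
    p n * casoratian u v n = p 0 * casoratian u v 0 := by
  induction n with
  | zero => rfl
  | succ n ih =>
    rw [← ih]
    simp only [jacobiOp] at hu hv
    simp only [casoratian]
    linear_combination u (n + 1) * hv n - v (n + 1) * hu n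

lemma jacobiOp_sum {ι : Type*} (p q : ℕ → R) (F : ℕ → ι → R) (s : Finset ι) (n : ℕ) :
    jacobiOp p q (fun m ↦ ∑ k ∈ s, F m k) n = ∑ k ∈ s, jacobiOp p q (F · k) n := by
  simp only [jacobiOp, mul_sum, sum_add_distrib, sum_sub_distrib]

lemma jacobiOp_sum_eq_zero_of_telescoping {p q G : ℕ → R} {F : ℕ → ℕ → R} {n : ℕ}
    (hF : ∀ m k, m < k → F m k = 0) (h_zero : jacobiOp p q (F · 0) n = G 0)
    (h_succ : ∀ k, jacobiOp p q (F · (k + 1)) n = G (k + 1) - G k) (hG : G (n + 2) = 0) :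
    jacobiOp p q (fun m ↦ ∑ k ∈ range (m + 1), F m k) n = 0 := by
  have extend (m : ℕ) (hm : m ≤ n + 2) :
      ∑ k ∈ range (m + 1), F m k = ∑ k ∈ range (n + 2 + 1), F m k :=
    sum_subset (range_mono (by lia)) fun k _ hk ↦ hF m k (by simpa using hk)
  calc jacobiOp p q (fun m ↦ ∑ k ∈ range (m + 1), F m k) n
      = jacobiOp p q (fun m ↦ ∑ k ∈ range (n + 2 + 1), F m k) n := by
        simp only [jacobiOp]
        rw [extend n (by lia), extend (n + 1) (by lia)]
    _ = 0 := by rw [jacobiOp_sum, sum_range_succ_eq_of_telescoping h_zero h_succ, hG]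

end JacobiOperator

lemma zseq_succ (n : ℕ) : zseq (n + 1) = zseq n + 1 / ((n : ℝ) + 1) ^ 3 := by
  simp [zseq, sum_Icc_succ_top]

lemma zseq_eq_sum_range (n : ℕ) : zseq n = ∑ m ∈ range n, 1 / ((m : ℝ) + 1) ^ 3 := by
  induction n with
  | zero => simp [zseq]
  | succ n ih => rw [zseq_succ, sum_range_succ, ih]

lemma zseq_nonneg (n : ℕ) : 0 ≤ zseq n :=
  sum_nonneg fun _ _ ↦ by positivity

lemma zseq_monotone : Monotone zseq :=
  monotone_nat_of_le_succ fun n ↦ by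
    rw [zseq_succ]
    exact le_add_of_nonneg_right (by positivity)

lemma tendsto_zseq : Tendsto zseq atTop (𝓝 zeta3) := by
  have summable_inv_cubes : Summable fun m : ℕ ↦ 1 / ((m : ℝ) + 1) ^ 3 := by
    simpa using (summable_nat_add_iff 1).mpr
      (Real.summable_one_div_nat_pow.mpr (show 1 < 3 by norm_num))
  exact summable_inv_cubes.hasSum.tendsto_sum_nat.congr fun n ↦ (zseq_eq_sum_range n).symm

lemma zseq_le_zeta3 (n : ℕ) : zseq n ≤ zeta3 :=
  zseq_monotone.ge_of_tendsto tendsto_zseq n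

lemma zeta3_pos : 0 < zeta3 :=
  lt_of_lt_of_le (by norm_num [zseq]) (zseq_le_zeta3 1)

/-! ### Apéry's binomial products -/

/-- Apéry's product `C(n,k) C(n+k,k)`, whose squares are the summands of `aseq n`. -/
noncomputable def aperyBinom (n k : ℕ) : ℝ := (n.choose k : ℝ) * ((n + k).choose k : ℝ)

@[simp]
lemma aperyBinom_zero_right (n : ℕ) : aperyBinom n 0 = 1 := by simp [aperyBinom]

lemma aperyBinom_eq_zero_of_lt {n k : ℕ} (h : n < k) : aperyBinom n k = 0 := by
  simp [aperyBinom, Nat.choose_eq_zero_of_lt h]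

lemma aperyBinom_nonneg (n k : ℕ) : 0 ≤ aperyBinom n k := by
  unfold aperyBinom
  positivity

lemma aperyBinom_mono_left (k : ℕ) : Monotone (aperyBinom · k) := fun _ _ h ↦ by
  simp only [aperyBinom]
  gcongr

lemma succ_le_aperyBinom {n k : ℕ} (hk : 1 ≤ k) (hkn : k ≤ n) : (n : ℝ) + 1 ≤ aperyBinom n k := by
  have one_le_choose : 1 ≤ n.choose k := Nat.choose_pos hkn
  have succ_le_choose : n + 1 ≤ (n + k).choose k :=
    calc n + 1 = (n + 1).choose n := by simp
      _ ≤ (n + k).choose n := Nat.choose_le_choose n (by lia)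
      _ = (n + k).choose k := Nat.choose_symm_add
  unfold aperyBinom
  exact_mod_cast one_mul (n + 1) ▸ Nat.mul_le_mul one_le_choose succ_le_choose

lemma aperyBinom_pos {n k : ℕ} (h : k ≤ n) : 0 < aperyBinom n k := by
  have := Nat.choose_pos h
  have := Nat.choose_pos (Nat.le_add_left k n)
  unfold aperyBinom
  positivity

lemma aperyBinom_succ_succ (n k : ℕ) :
    aperyBinom (n + 1) (k + 1)
      = aperyBinom n k * (((n : ℝ) + k + 1) * (n + k + 2)) / ((k : ℝ) + 1) ^ 2 := by
  have h₁ : ((n : ℝ) + 1) * n.choose k = (n + 1).choose (k + 1) * (k + 1) := by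
    exact_mod_cast Nat.add_one_mul_choose_eq n k
  have h₂ : ((n : ℝ) + k + 2) * (n + k + 1).choose k
      = (n + 1 + (k + 1)).choose (k + 1) * (k + 1) := by
    rw [show n + 1 + (k + 1) = n + k + 1 + 1 by ring]
    exact_mod_cast Nat.add_one_mul_choose_eq (n + k + 1) k
  have h₃ : ((n + k).choose k : ℝ) * (n + k + 1) = (n + k + 1).choose k * (n + 1) := by
    have := Nat.choose_mul_succ_eq (n + k) k
    rw [show n + k + 1 - k = n + 1 by lia] at this
    exact_mod_cast this
  rw [eq_div_iff (by positivity)]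
  refine mul_right_cancel₀ (show (n : ℝ) + 1 ≠ 0 by positivity) ?_
  unfold aperyBinom
  linear_combination
    -(n + 1 + (k + 1)).choose (k + 1) * (k + 1) * (n + 1) * h₁
      - (n + 1) * n.choose k * (n + 1) * h₂
      - (n + 1) * n.choose k * (n + k + 2) * h₃

lemma aperyBinom_eq_succ_left (n k : ℕ) :
    aperyBinom n k = aperyBinom (n + 1) k * ((n : ℝ) + 1 - k) / (n + k + 1) := by
  rcases lt_or_ge (n + 1) k with h | h
  · simp [aperyBinom_eq_zero_of_lt h, aperyBinom_eq_zero_of_lt (Nat.lt_of_succ_lt h)]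
  have h₁ : (n.choose k : ℝ) * (n + 1) = (n + 1).choose k * ((n : ℝ) + 1 - k) := by
    have := congrArg (Nat.cast : ℕ → ℝ) (Nat.choose_mul_succ_eq n k)
    push_cast [Nat.cast_sub h] at this
    exact this
  have h₂ : ((n + k).choose k : ℝ) * (n + k + 1) = (n + 1 + k).choose k * (n + 1) := by
    have := Nat.choose_mul_succ_eq (n + k) k
    rw [show n + k + 1 - k = n + 1 by lia, show n + k + 1 = n + 1 + k by ring] at this
    rw [show (n : ℝ) + k + 1 = n + 1 + k by ring]
    exact_mod_cast this
  rw [eq_div_iff (by positivity)]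
  refine mul_right_cancel₀ (show (n : ℝ) + 1 ≠ 0 by positivity) ?_
  unfold aperyBinom
  linear_combination (n + k + 1) * (n + k).choose k * h₁
    + (n + 1).choose k * ((n : ℝ) + 1 - k) * h₂

lemma aperyBinom_succ_right (n k : ℕ) :
    aperyBinom n (k + 1) = aperyBinom n k * (((n : ℝ) - k) * (n + k + 1)) / ((k : ℝ) + 1) ^ 2 := by
  rw [aperyBinom_eq_succ_left, aperyBinom_succ_succ]
  push_cast
  have : (n : ℝ) + (k + 1) + 1 ≠ 0 := by positivity
  field_simp
  ring

lemma aperyBinom_succ_right_eq_succ_left (n k : ℕ) :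
    aperyBinom n (k + 1)
      = aperyBinom (n + 1) k * (((n : ℝ) + 1 - k) * (n - k)) / ((k : ℝ) + 1) ^ 2 := by
  rw [aperyBinom_succ_right, aperyBinom_eq_succ_left]
  have : (n : ℝ) + k + 1 ≠ 0 := by positivity
  field_simp

/-! ### Apéry's approximations to `ζ(3)` -/

/-- Apéry's double sequence `c_{n,k}`; `bseq n / aseq n` is the mean of its `n`-th row with weights
`aperyBinom n k ^ 2`. For `k > n` the terms with `m > n` are divided by zero, hence vanish. -/
noncomputable def aperyApprox (n k : ℕ) : ℝ :=
  zseq n + ∑ m ∈ Icc 1 k, (-1 : ℝ) ^ (m + 1) / (2 * (m : ℝ) ^ 3 * aperyBinom n m)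

@[simp]
lemma aperyApprox_zero_right (n : ℕ) : aperyApprox n 0 = zseq n := by simp [aperyApprox]

lemma aperyApprox_succ_right (n k : ℕ) :
    aperyApprox n (k + 1)
      = aperyApprox n k + (-1 : ℝ) ^ k / (2 * ((k : ℝ) + 1) ^ 3 * aperyBinom n (k + 1)) := by
  unfold aperyApprox
  rw [sum_Icc_succ_top (by lia), pow_add _ k 2]
  push_cast
  ring

lemma aperyApprox_succ_left {n k : ℕ} (h : k ≤ n) :
    aperyApprox (n + 1) k = aperyApprox n k
      + (-1 : ℝ) ^ k / (((n : ℝ) + 1) ^ 2 * (n + k + 1) * aperyBinom n k) := by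
  induction k with
  | zero =>
    simp only [aperyApprox_zero_right, aperyBinom_zero_right, zseq_succ]
    push_cast
    ring
  | succ k ih =>
    have hkn : (n : ℝ) - k ≠ 0 := sub_ne_zero.mpr (by exact_mod_cast (show n ≠ k by lia))
    have hβ := (aperyBinom_pos (show k ≤ n by lia)).ne'
    have : (n : ℝ) + k + 1 ≠ 0 := by positivity
    have : (n : ℝ) + k + 2 ≠ 0 := by positivity
    rw [aperyApprox_succ_right, aperyApprox_succ_right, ih (by lia), aperyBinom_succ_succ,
      aperyBinom_succ_right, pow_succ]
    push_cast
    rw [show (n : ℝ) + (k + 1) + 1 = n + k + 2 by ring]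
    field_simp
    ring

lemma sq_mul_aperyApprox_succ_right (n k : ℕ) :
    aperyBinom n (k + 1) ^ 2 * aperyApprox n (k + 1)
      = aperyBinom n (k + 1) ^ 2 * aperyApprox n k
        + aperyBinom n (k + 1) * (-1) ^ k / (2 * ((k : ℝ) + 1) ^ 3) := by
  rw [aperyApprox_succ_right]
  rcases eq_or_ne (aperyBinom n (k + 1)) 0 with h | h
  · simp [h]
  · field_simp

lemma sq_mul_aperyApprox_succ_left (n k : ℕ) :
    aperyBinom n k ^ 2 * aperyApprox (n + 1) k
      = aperyBinom n k ^ 2 * aperyApprox n k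
        + aperyBinom n k * (-1) ^ k / (((n : ℝ) + 1) ^ 2 * (n + k + 1)) := by
  rcases lt_or_ge n k with h | h
  · simp [aperyBinom_eq_zero_of_lt h]
  · have := (aperyBinom_pos h).ne'
    have : (n : ℝ) + k + 1 ≠ 0 := by positivity
    rw [aperyApprox_succ_left h]
    field_simp

lemma sq_mul_aperyApprox_succ_succ (n k : ℕ) :
    aperyBinom (n + 1) (k + 1) ^ 2 * aperyApprox (n + 1) (k + 1)
      = aperyBinom (n + 1) (k + 1) ^ 2 * aperyApprox n k + aperyBinom (n + 1) (k + 1) * (-1) ^ k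
        * (((n : ℝ) + k + 2) / ((n + 1) ^ 2 * (k + 1) ^ 2) + 1 / (2 * (k + 1) ^ 3)) := by
  have left := sq_mul_aperyApprox_succ_left n k
  have right := sq_mul_aperyApprox_succ_right (n + 1) k
  have : (n : ℝ) + k + 1 ≠ 0 := by positivity
  rw [right, aperyBinom_succ_succ]
  linear_combination (norm := (field_simp; ring))
    (((n : ℝ) + k + 1) * (n + k + 2) / (k + 1) ^ 2) ^ 2 * left

lemma sq_mul_aperyApprox_succ_right_eq_succ_left (n k : ℕ) :
    aperyBinom n (k + 1) ^ 2 * aperyApprox n (k + 1)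
      = aperyBinom n (k + 1) ^ 2 * aperyApprox (n + 1) k + aperyBinom n (k + 1) * (-1) ^ k
        * (1 / (((n : ℝ) + 1) ^ 2 * (n + k + 2)) + (n - k) / (2 * (k + 1) ^ 3 * (n + k + 2))) := by
  have left := sq_mul_aperyApprox_succ_left n (k + 1)
  have right := sq_mul_aperyApprox_succ_right (n + 1) k
  have ratio := aperyBinom_eq_succ_left n (k + 1)
  push_cast at left ratio
  rw [show (n : ℝ) + (k + 1) + 1 = n + k + 2 by ring] at left ratio
  have : (n : ℝ) + k + 2 ≠ 0 := by positivity
  rw [ratio] at left ⊢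
  linear_combination (norm := (field_simp; ring)) (((n : ℝ) - k) / (n + k + 2)) ^ 2 * right - left

lemma abs_aperyApprox_sub_zseq_le {n k : ℕ} (h : k ≤ n) :
    |aperyApprox n k - zseq n| ≤ zeta3 / ((n : ℝ) + 1) := by
  have term_le (m : ℕ) (hm : m ∈ Icc 1 k) :
      |(-1 : ℝ) ^ (m + 1) / (2 * (m : ℝ) ^ 3 * aperyBinom n m)|
        ≤ 1 / (m : ℝ) ^ 3 / ((n : ℝ) + 1) := by
    obtain ⟨one_le_m, m_le_k⟩ := mem_Icc.mp hm
    have hβ := succ_le_aperyBinom one_le_m (m_le_k.trans h)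
    have : 0 < (m : ℝ) := by exact_mod_cast one_le_m
    rw [abs_div, abs_neg_one_pow, abs_of_nonneg (by have := aperyBinom_nonneg n m; positivity),
      div_div]
    gcongr
    exact le_mul_of_one_le_left (by positivity) one_le_two
  calc |aperyApprox n k - zseq n|
      = |∑ m ∈ Icc 1 k, (-1 : ℝ) ^ (m + 1) / (2 * (m : ℝ) ^ 3 * aperyBinom n m)| := by
        rw [aperyApprox, add_sub_cancel_left]
    _ ≤ ∑ m ∈ Icc 1 k, 1 / (m : ℝ) ^ 3 / ((n : ℝ) + 1) :=
        (abs_sum_le_sum_abs _ _).trans (sum_le_sum term_le)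
    _ = zseq k / ((n : ℝ) + 1) := by rw [zseq, sum_div]
    _ ≤ zeta3 / ((n : ℝ) + 1) := by
        gcongr
        exact zseq_le_zeta3 k

lemma aseq_eq_sum (n : ℕ) : aseq n = ∑ k ∈ range (n + 1), aperyBinom n k ^ 2 := by
  simp only [aseq, aperyBinom, mul_pow]

lemma bseq_eq_sum (n : ℕ) :
    bseq n = ∑ k ∈ range (n + 1), aperyBinom n k ^ 2 * aperyApprox n k := by
  simp only [aperyApprox, mul_add, sum_add_distrib, ← sum_mul, ← aseq_eq_sum, bseq]
  congr 1
  rw [range_eq_Ico, sum_eq_sum_Ico_succ_bot (by lia)]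
  simp only [zero_add, Icc_eq_empty_of_lt zero_lt_one, sum_empty, mul_zero, mul_sum]
  refine sum_congr rfl fun k _ ↦ sum_congr rfl fun m _ ↦ ?_
  simp only [aperyBinom]
  ring

lemma aseq_pos (n : ℕ) : 0 < aseq n := by
  rw [aseq_eq_sum]
  exact sum_pos (fun k hk ↦ pow_pos (aperyBinom_pos (mem_range_succ_iff.mp hk)) 2) (by simp)

lemma aseq_monotone : Monotone aseq := fun n m h ↦ by
  rw [aseq_eq_sum, aseq_eq_sum]
  calc ∑ k ∈ range (n + 1), aperyBinom n k ^ 2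
      ≤ ∑ k ∈ range (n + 1), aperyBinom m k ^ 2 :=
        sum_le_sum fun k _ ↦ pow_le_pow_left₀ (aperyBinom_nonneg n k) (aperyBinom_mono_left k h) 2
    _ ≤ ∑ k ∈ range (m + 1), aperyBinom m k ^ 2 :=
        sum_le_sum_of_subset_of_nonneg (range_mono (by lia)) fun _ _ _ ↦ sq_nonneg _

lemma bseq_div_aseq_eq_centerMass (n : ℕ) :
    bseq n / aseq n = (range (n + 1)).centerMass (aperyBinom n · ^ 2) (aperyApprox n) := by
  simp only [centerMass, smul_eq_mul, ← aseq_eq_sum, ← bseq_eq_sum]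
  ring

lemma dist_bseq_div_aseq_zseq_le (n : ℕ) :
    dist (bseq n / aseq n) (zseq n) ≤ zeta3 / ((n : ℝ) + 1) := by
  rw [bseq_div_aseq_eq_centerMass, ← Metric.mem_closedBall]
  refine (convex_closedBall _ _).centerMass_mem (fun _ _ ↦ sq_nonneg _)
    (aseq_eq_sum n ▸ aseq_pos n) fun k hk ↦ ?_
  exact abs_aperyApprox_sub_zseq_le (mem_range_succ_iff.mp hk)

lemma tendsto_bseq_div_aseq : Tendsto (fun n ↦ bseq n / aseq n) atTop (𝓝 zeta3) := by
  have error_tendsto : Tendsto (fun n : ℕ ↦ zeta3 / ((n : ℝ) + 1)) atTop (𝓝 0) := by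
    simpa [div_eq_mul_inv] using
      (tendsto_one_div_add_atTop_nhds_zero_nat (𝕜 := ℝ)).const_mul zeta3
  refine tendsto_zseq.congr_dist (squeeze_zero (fun _ ↦ dist_nonneg) (fun n ↦ ?_) error_tendsto)
  rw [dist_comm]
  exact dist_bseq_div_aseq_zseq_le n

/-! ### Apéry's recurrence -/

/-- The operator of Apéry's recurrence: in terms of `x = n + 1`, it is
`(x+1)³ u (x+1) - (34x³ + 51x² + 27x + 5) u x + x³ u (x-1)`. It annihilates `aseq` and `bseq`. -/
noncomputable def aperyOp : (ℕ → ℝ) → ℕ → ℝ :=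
  jacobiOp (fun n ↦ ((n : ℝ) + 1) ^ 3)
    (fun n ↦ 34 * ((n : ℝ) + 1) ^ 3 + 51 * ((n : ℝ) + 1) ^ 2 + 27 * ((n : ℝ) + 1) + 5)

/-- Zagier's telescoping certificate `B_{n,k}` for the recurrence of `aseq`, centred at index `n`
(so for row `n - 1` of `aperyOp`). -/
noncomputable def aperyCertA (n k : ℕ) : ℝ :=
  4 * (2 * (n : ℝ) + 1) * (k * (2 * k + 1) - (2 * n + 1) ^ 2) * aperyBinom n k ^ 2

/-- Zagier's telescoping certificate `A_{n,k}` for the recurrence of `bseq`, centred at index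
`n ≥ 1` (so for row `n - 1` of `aperyOp`). -/
noncomputable def aperyCertB (n k : ℕ) : ℝ :=
  aperyCertA n k * aperyApprox n k
    - 5 * (2 * (n : ℝ) + 1) * (-1) ^ k * k / (n * (n + 1)) * aperyBinom n k

lemma aperyOp_sq_aperyBinom_zero (n : ℕ) :
    aperyOp (aperyBinom · 0 ^ 2) n = aperyCertA (n + 1) 0 := by
  simp only [aperyOp, jacobiOp, aperyCertA, aperyBinom_zero_right]
  push_cast
  ring

lemma aperyOp_sq_aperyBinom_succ (n k : ℕ) :
    aperyOp (aperyBinom · (k + 1) ^ 2) n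
      = aperyCertA (n + 1) (k + 1) - aperyCertA (n + 1) k := by
  simp only [aperyOp, jacobiOp, aperyCertA]
  rw [aperyBinom_succ_succ (n + 1), aperyBinom_succ_right (n + 1),
    aperyBinom_succ_right_eq_succ_left n]
  push_cast
  field_simp
  ring

lemma aperyOp_sq_mul_aperyApprox_zero (n : ℕ) :
    aperyOp (fun m ↦ aperyBinom m 0 ^ 2 * aperyApprox m 0) n = aperyCertB (n + 1) 0 := by
  simp only [aperyOp, jacobiOp, aperyCertB, aperyCertA, aperyBinom_zero_right,
    aperyApprox_zero_right, zseq_succ]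
  push_cast
  field_simp
  ring

lemma aperyOp_sq_mul_aperyApprox_succ (n k : ℕ) :
    aperyOp (fun m ↦ aperyBinom m (k + 1) ^ 2 * aperyApprox m (k + 1)) n
      = aperyCertB (n + 1) (k + 1) - aperyCertB (n + 1) k := by
  simp only [aperyOp, jacobiOp, aperyCertB, aperyCertA, sub_mul, mul_assoc]
  rw [sq_mul_aperyApprox_succ_succ (n + 1), sq_mul_aperyApprox_succ_right (n + 1),
    sq_mul_aperyApprox_succ_right_eq_succ_left n, aperyBinom_succ_succ (n + 1),
    aperyBinom_succ_right (n + 1), aperyBinom_succ_right_eq_succ_left n]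
  push_cast
  field_simp
  ring

lemma aperyOp_aseq (n : ℕ) : aperyOp aseq n = 0 := by
  rw [funext aseq_eq_sum]
  refine jacobiOp_sum_eq_zero_of_telescoping (G := aperyCertA (n + 1))
    (fun m k h ↦ ?_) (aperyOp_sq_aperyBinom_zero n) (aperyOp_sq_aperyBinom_succ n) ?_
  · simp [aperyBinom_eq_zero_of_lt h]
  · simp [aperyCertA, aperyBinom_eq_zero_of_lt]

lemma aperyOp_bseq (n : ℕ) : aperyOp bseq n = 0 := by
  rw [funext bseq_eq_sum]
  refine jacobiOp_sum_eq_zero_of_telescoping (G := aperyCertB (n + 1))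
    (fun m k h ↦ ?_) (aperyOp_sq_mul_aperyApprox_zero n) (aperyOp_sq_mul_aperyApprox_succ n) ?_
  · simp [aperyBinom_eq_zero_of_lt h]
  · simp [aperyCertB, aperyCertA, aperyBinom_eq_zero_of_lt]

lemma cube_mul_casoratian_aseq_bseq (n : ℕ) : ((n : ℝ) + 1) ^ 3 * casoratian aseq bseq n = 6 := by
  rw [mul_casoratian_eq_of_jacobiOp_eq_zero aperyOp_aseq aperyOp_bseq n]
  norm_num [casoratian, bseq, aseq, zseq, sum_range_succ]

/-! ### Comparison with the tail of `ζ(3)` -/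

lemma bseq_div_aseq_succ_sub (n : ℕ) :
    bseq (n + 1) / aseq (n + 1) - bseq n / aseq n
      = 6 / (aseq n * aseq (n + 1)) * (zseq (n + 1) - zseq n) := by
  have := (aseq_pos n).ne'
  have := (aseq_pos (n + 1)).ne'
  rw [zseq_succ, add_sub_cancel_left, ← cube_mul_casoratian_aseq_bseq n, casoratian]
  field_simp

lemma bseq_div_aseq_succ_sub_le {n k : ℕ} (h : n ≤ k) :
    bseq (k + 1) / aseq (k + 1) - bseq k / aseq k
      ≤ 6 / aseq n ^ 2 * (zseq (k + 1) - zseq k) := by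
  have a_pos := aseq_pos n
  have mul_le : aseq n ^ 2 ≤ aseq k * aseq (k + 1) := by
    rw [sq]
    exact mul_le_mul (aseq_monotone h) (aseq_monotone (Nat.le_succ_of_le h)) a_pos.le
      (aseq_pos k).le
  have z_le := sub_nonneg.mpr (zseq_monotone (Nat.le_succ k))
  rw [bseq_div_aseq_succ_sub]
  gcongr

theorem zeta3_minus_b_over_a_bigO_general (n : ℕ) :
    zeta3 - bseq n / aseq n ≤ 6 * (zeta3 - zseq n) / aseq n ^ 2 := by
  rw [mul_div_right_comm]
  exact sub_le_mul_sub_of_tendsto tendsto_zseq tendsto_bseq_div_aseq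
    fun _ ↦ bseq_div_aseq_succ_sub_le

/-- There is a constant `K > 0` such that eventually `ζ(3) - b n / a n ≤ K / (a n)²`;
in fact any constant `K` greater than `6 ζ(3)` works. -/
theorem zeta3_minus_b_over_a_bigO :
    (∃ K : ℝ, 0 < K ∧ ∀ᶠ n : ℕ in Filter.atTop, zeta3 - bseq n / aseq n ≤ K / (aseq n) ^ 2) ∧
    (∀ K : ℝ, 6 * zeta3 < K →
      ∀ᶠ n : ℕ in Filter.atTop, zeta3 - bseq n / aseq n ≤ K / (aseq n) ^ 2) := by
  have bound {K : ℝ} (hK : 6 * zeta3 ≤ K) (n : ℕ) :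
      zeta3 - bseq n / aseq n ≤ K / aseq n ^ 2 := by
    refine (zeta3_minus_b_over_a_bigO_general n).trans ?_
    gcongr
    linarith [zseq_nonneg n]
  exact ⟨⟨6 * zeta3, by linarith [zeta3_pos], .of_forall (bound le_rfl)⟩,
    fun K hK ↦ .of_forall (bound hK.le)⟩
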